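/- arXiv:1709.05890 — 3 statements merged into one kernel-verified Lean document; each statement's English description precedes it below -/
import Mathlib

section
/- Let x : ℝ → ℝ be continuously differentiable and u : ℝ → ℝ be continuous. Define X(t) = ∫_0^t cos(x(t) − x(s)) u(s) ds and Y(t) = ∫_0^t sin(x(t) − x(s)) u(s) ds. Then for every t, X is differentiable at t with X′(t) = −x′(t) · Y(t) + u(t), and Y is differentiable at t with Y′(t) = x′(t) · X(t). -/
open MeasureTheory

/-- The angle-subtraction formula for the cosine, integrated against a weight. -/
lemma integral_cos_sub_mul {x u : ℝ → ℝ} (hx : Continuous x) (hu : Continuous u) (a b θ : ℝ) :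
    ∫ s in a..b, Real.cos (θ - x s) * u s =
      Real.cos θ * (∫ s in a..b, Real.cos (x s) * u s) +
        Real.sin θ * ∫ s in a..b, Real.sin (x s) * u s := by
  rw [← intervalIntegral.integral_const_mul, ← intervalIntegral.integral_const_mul,
    ← intervalIntegral.integral_add (Continuous.intervalIntegrable (by fun_prop) _ _)
      (Continuous.intervalIntegrable (by fun_prop) _ _)]
  congr 1 with s
  rw [Real.cos_sub]
  ring

/-- The angle-subtraction formula for the sine, integrated against a weight. -/
lemma integral_sin_sub_mul {x u : ℝ → ℝ} (hx : Continuous x) (hu : Continuous u) (a b θ : ℝ) :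
    ∫ s in a..b, Real.sin (θ - x s) * u s =
      Real.sin θ * (∫ s in a..b, Real.cos (x s) * u s) -
        Real.cos θ * ∫ s in a..b, Real.sin (x s) * u s := by
  rw [← intervalIntegral.integral_const_mul, ← intervalIntegral.integral_const_mul,
    ← intervalIntegral.integral_sub (Continuous.intervalIntegrable (by fun_prop) _ _)
      (Continuous.intervalIntegrable (by fun_prop) _ _)]
  congr 1 with s
  rw [Real.sin_sub]
  ring

theorem stmt_4 (x : ℝ → ℝ) (hx : ContDiff ℝ 1 x) (u : ℝ → ℝ) (hu : Continuous u)
    (X Y : ℝ → ℝ)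
    (hX : ∀ t : ℝ, X t = ∫ s in (0:ℝ)..t, Real.cos (x t - x s) * u s)
    (hY : ∀ t : ℝ, Y t = ∫ s in (0:ℝ)..t, Real.sin (x t - x s) * u s) :
    ∀ t : ℝ, HasDerivAt X (-(deriv x t) * Y t + u t) t ∧
      HasDerivAt Y (deriv x t * X t) t := by
  intro t
  have hxc := hx.continuous
  have hxt : HasDerivAt x (deriv x t) t :=
    (hx.differentiable one_ne_zero).differentiableAt.hasDerivAt
  have hC : HasDerivAt (fun r => ∫ s in (0:ℝ)..r, Real.cos (x s) * u s)
      (Real.cos (x t) * u t) t :=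
    (Continuous.integral_hasStrictDerivAt (by fun_prop) 0 t).hasDerivAt
  have hS : HasDerivAt (fun r => ∫ s in (0:ℝ)..r, Real.sin (x s) * u s)
      (Real.sin (x t) * u t) t :=
    (Continuous.integral_hasStrictDerivAt (by fun_prop) 0 t).hasDerivAt
  simp only [integral_cos_sub_mul hxc hu] at hX
  simp only [integral_sin_sub_mul hxc hu] at hY
  rw [hX t, hY t, funext hX, funext hY]
  constructor
  · refine ((hxt.cos.mul hC).add (hxt.sin.mul hS)).congr_deriv ?_
    linear_combination u t * Real.sin_sq_add_cos_sq (x t)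
  · refine ((hxt.sin.mul hC).sub (hxt.cos.mul hS)).congr_deriv ?_
    ring
end

section
/- Let x : ℝ → ℝ be continuously differentiable and u : ℝ → ℝ be continuous. Define X(t) = ∫_0^t cos(x(t) − x(s)) u(s) ds and Y(t) = ∫_0^t sin(x(t) − x(s)) u(s) ds. Then for every t ≥ 0, Y(t) = ∫_0^t X(s) · x′(s) ds. -/
open MeasureTheory

theorem stmt_5 (x : ℝ → ℝ) (hx : ContDiff ℝ 1 x) (u : ℝ → ℝ) (hu : Continuous u)
    (X Y : ℝ → ℝ)
    (hX : ∀ t : ℝ, X t = ∫ s in (0:ℝ)..t, Real.cos (x t - x s) * u s)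
    (hY : ∀ t : ℝ, Y t = ∫ s in (0:ℝ)..t, Real.sin (x t - x s) * u s) :
    ∀ t : ℝ, 0 ≤ t → Y t = ∫ s in (0:ℝ)..t, X s * deriv x s := by
  intro t _
  have hxc : Continuous x := hx.continuous
  have hcos : Continuous fun s => Real.cos (x s) * u s := by fun_prop
  have hsin : Continuous fun s => Real.sin (x s) * u s := by fun_prop
  let C : ℝ → ℝ := fun r => ∫ s in (0:ℝ)..r, Real.cos (x s) * u s
  let S : ℝ → ℝ := fun r => ∫ s in (0:ℝ)..r, Real.sin (x s) * u s
  have hC (r : ℝ) : HasDerivAt C (Real.cos (x r) * u r) r :=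
    (hcos.integral_hasStrictDerivAt 0 r).hasDerivAt
  have hS (r : ℝ) : HasDerivAt S (Real.sin (x r) * u r) r :=
    (hsin.integral_hasStrictDerivAt 0 r).hasDerivAt
  have hXeq (r : ℝ) : X r = Real.cos (x r) * C r + Real.sin (x r) * S r := by
    rw [hX, ← intervalIntegral.integral_const_mul, ← intervalIntegral.integral_const_mul,
      ← intervalIntegral.integral_add ((hcos.intervalIntegrable _ _).const_mul _)
        ((hsin.intervalIntegrable _ _).const_mul _)]
    congr 1 with s
    rw [Real.cos_sub]
    ring
  have hYeq : Y = fun r => Real.sin (x r) * C r - Real.cos (x r) * S r := by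
    funext r
    rw [hY, ← intervalIntegral.integral_const_mul, ← intervalIntegral.integral_const_mul,
      ← intervalIntegral.integral_sub ((hcos.intervalIntegrable _ _).const_mul _)
        ((hsin.intervalIntegrable _ _).const_mul _)]
    congr 1 with s
    rw [Real.sin_sub]
    ring
  have hYderiv (r : ℝ) : HasDerivAt Y (X r * deriv x r) r := by
    have hxr : HasDerivAt x (deriv x r) r := (hx.differentiable one_ne_zero r).hasDerivAt
    rw [hYeq, hXeq]
    refine ((hxr.sin.mul (hC r)).sub (hxr.cos.mul (hS r))).congr_deriv ?_
    ring
  have hXc : Continuous X := by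
    have hCc : Continuous C := continuous_iff_continuousAt.2 fun r => (hC r).continuousAt
    have hSc : Continuous S := continuous_iff_continuousAt.2 fun r => (hS r).continuousAt
    rw [funext hXeq]
    fun_prop
  have hY0 : Y 0 = 0 := by simp [hY]
  rw [intervalIntegral.integral_eq_sub_of_hasDerivAt (fun r _ => hYderiv r)
    ((hXc.mul hx.continuous_deriv_one).intervalIntegrable _ _), hY0, sub_zero]
end

section
/- Let x : ℝ → ℝ be continuously differentiable and σ, u : ℝ → ℝ be continuous. Define X̃(t) = ∫_0^t cos(x(t) − x(s)) · exp((1/2) ∫_s^t σ(r)² dr) · u(s) ds and Ỹ(t) = ∫_0^t sin(x(t) − x(s)) · exp((1/2) ∫_s^t σ(r)² dr) · u(s) ds. Then for every t, X̃ is differentiable at t with X̃′(t) = −x′(t) · Ỹ(t) + (1/2) σ(t)² · X̃(t) + u(t), and Ỹ is differentiable at t with Ỹ′(t) = x′(t) · X̃(t) + (1/2) σ(t)² · Ỹ(t). -/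
open MeasureTheory

theorem stmt_10 (x : ℝ → ℝ) (hx : ContDiff ℝ 1 x) (σ u : ℝ → ℝ)
    (hσ : Continuous σ) (hu : Continuous u)
    (X Y : ℝ → ℝ)
    (hX : ∀ t : ℝ, X t = ∫ s in (0:ℝ)..t,
      Real.cos (x t - x s) * Real.exp ((1 / 2) * ∫ r in s..t, σ r ^ 2) * u s)
    (hY : ∀ t : ℝ, Y t = ∫ s in (0:ℝ)..t,
      Real.sin (x t - x s) * Real.exp ((1 / 2) * ∫ r in s..t, σ r ^ 2) * u s) :
    ∀ t : ℝ,
      HasDerivAt X (-(deriv x t) * Y t + (1 / 2) * σ t ^ 2 * X t + u t) t ∧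
      HasDerivAt Y (deriv x t * X t + (1 / 2) * σ t ^ 2 * Y t) t := by
  have hσ2 : Continuous fun r => σ r ^ 2 := hσ.pow 2
  have hxc : Continuous x := hx.continuous
  obtain ⟨S, hS⟩ : ∃ S : ℝ → ℝ, ∀ t, S t = ∫ r in (0:ℝ)..t, σ r ^ 2 := ⟨_, fun _ => rfl⟩
  have hS_deriv (t : ℝ) : HasDerivAt S (σ t ^ 2) t := by
    rw [funext hS]
    exact hσ2.integral_hasStrictDerivAt 0 t |>.hasDerivAt
  have hSc : Continuous S :=
    continuous_iff_continuousAt.2 fun t => (hS_deriv t).continuousAt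
  have hS_sub (s t : ℝ) : ∫ r in s..t, σ r ^ 2 = S t - S s := by
    rw [hS, hS, intervalIntegral.integral_interval_sub_left] <;>
      exact hσ2.intervalIntegrable _ _
  have hexp (s t : ℝ) : Real.exp ((1 / 2) * ∫ r in s..t, σ r ^ 2) =
      Real.exp ((1 / 2) * S t) * Real.exp (-((1 / 2) * S s)) := by
    rw [hS_sub, ← Real.exp_add]
    ring_nf
  obtain ⟨a, ha⟩ : ∃ a : ℝ → ℝ,
      ∀ s, a s = Real.cos (x s) * Real.exp (-((1 / 2) * S s)) * u s := ⟨_, fun _ => rfl⟩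
  obtain ⟨b, hb⟩ : ∃ b : ℝ → ℝ,
      ∀ s, b s = Real.sin (x s) * Real.exp (-((1 / 2) * S s)) * u s := ⟨_, fun _ => rfl⟩
  have hac : Continuous a := by rw [funext ha]; fun_prop
  have hbc : Continuous b := by rw [funext hb]; fun_prop
  have hX_factor (t : ℝ) : X t = Real.exp ((1 / 2) * S t) *
      (Real.cos (x t) * (∫ s in (0:ℝ)..t, a s) + Real.sin (x t) * ∫ s in (0:ℝ)..t, b s) := by
    rw [hX, ← intervalIntegral.integral_const_mul, ← intervalIntegral.integral_const_mul,
      ← intervalIntegral.integral_add ((hac.const_mul _).intervalIntegrable _ _)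
        ((hbc.const_mul _).intervalIntegrable _ _), ← intervalIntegral.integral_const_mul]
    refine intervalIntegral.integral_congr fun s _ => ?_
    simp only [hexp, ha, hb, Real.cos_sub]
    ring
  have hY_factor (t : ℝ) : Y t = Real.exp ((1 / 2) * S t) *
      (Real.sin (x t) * (∫ s in (0:ℝ)..t, a s) - Real.cos (x t) * ∫ s in (0:ℝ)..t, b s) := by
    rw [hY, ← intervalIntegral.integral_const_mul, ← intervalIntegral.integral_const_mul,
      ← intervalIntegral.integral_sub ((hac.const_mul _).intervalIntegrable _ _)
        ((hbc.const_mul _).intervalIntegrable _ _), ← intervalIntegral.integral_const_mul]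
    refine intervalIntegral.integral_congr fun s _ => ?_
    simp only [hexp, ha, hb, Real.sin_sub]
    ring
  intro t
  have hx_deriv : HasDerivAt x (deriv x t) t :=
    (hx.differentiable one_ne_zero t).hasDerivAt
  have hA := (hac.integral_hasStrictDerivAt 0 t).hasDerivAt
  have hB := (hbc.integral_hasStrictDerivAt 0 t).hasDerivAt
  have hE := ((hS_deriv t).const_mul (1 / 2)).exp
  have hE_inv : Real.exp ((1 / 2) * S t) * Real.exp (-((1 / 2) * S t)) = 1 := by
    rw [← Real.exp_add, add_neg_cancel, Real.exp_zero]
  have hsq := Real.sin_sq_add_cos_sq (x t)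
  constructor
  · rw [hX_factor t, hY_factor t, funext hX_factor]
    refine (hE.mul ((hx_deriv.cos.mul hA).add (hx_deriv.sin.mul hB))).congr_deriv ?_
    simp only [ha t, hb t, Pi.add_apply, Pi.mul_apply]
    linear_combination u t * hE_inv +
      Real.exp ((1 / 2) * S t) * Real.exp (-((1 / 2) * S t)) * u t * hsq
  · rw [hX_factor t, hY_factor t, funext hY_factor]
    refine (hE.mul ((hx_deriv.sin.mul hA).sub (hx_deriv.cos.mul hB))).congr_deriv ?_
    simp only [ha t, hb t, Pi.sub_apply, Pi.mul_apply]
    ring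
end
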